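/- Let n ≥ 2 be an integer, σ > 0, and w, l ∈ [0,n] real. Let h ∈ ℂ^n be the entrywise derivative of the Gaudi mask with respect to the location, i.e. h[j] = (1/n)·Σ_{k=0}^{n−1} e^{2πi·jk/n} · (−2πi·k/n) · e^{−2πi·kl/n} · d_w^σ[k], which is the derivative at l of the function l ↦ m̃_{(w,l)}^σ[j] for each j. Then the Euclidean norm of h satisfies ‖h‖₂ ≤ 2π·((n−1)/n)/sinc((n−1)/n) < ∞. -/

import Mathlib

open BigOperators

/-- The normalized sinc function: `sinc x = sin(πx)/(πx)` for `x ≠ 0`, `sinc 0 = 1`. -/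
noncomputable def sinc (x : ℝ) : ℝ :=
  if x = 0 then 1 else Real.sin (Real.pi * x) / (Real.pi * x)

/-- The Gaudi (Gaussian-Dirichlet) function with real-valued width `w`:
`d_w^σ[k] = e^{−k²/(2σ²)} · w · sinc(wk/n)/sinc(k/n) · e^{iπk(1−w)/n}`. -/
noncomputable def dKerR (n : ℕ) (σ : ℝ) (w : ℝ) (k : ℕ) : ℂ :=
  (Real.exp (-(k : ℝ) ^ 2 / (2 * σ ^ 2)) : ℝ)
    * ((w * sinc (w * k / n) / sinc ((k : ℝ) / n) : ℝ) : ℂ)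
    * Complex.exp (Complex.I * (Real.pi : ℂ) * (k : ℂ) * (1 - (w : ℂ)) / (n : ℂ))

/-!
The vector `h` is the inverse discrete Fourier transform of the coefficients
`(-2πik/n) e^{-2πikl/n} d_w^σ[k]`, so Parseval bounds its norm by their largest modulus. Since
`w · sinc (wk/n) = sin (πwk/n) · n / (πk)`, the factor `2πk/n` cancels its `1/k` and each modulus
is at most `2 / sinc (k/n) ≤ 2 / sinc ((n-1)/n)`; finally `1 ≤ π(n-1)/n`.
-/

open Finset ZMod

section Sinc

theorem sinc_eq_real_sinc (x : ℝ) : sinc x = Real.sinc (Real.pi * x) := by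
  simp [sinc, Real.sinc_apply, Real.pi_ne_zero]

theorem pi_mul_mul_sinc (x : ℝ) : Real.pi * x * sinc x = Real.sin (Real.pi * x) := by
  rcases eq_or_ne x 0 with rfl | hx
  · simp
  · rw [sinc, if_neg hx, mul_div_cancel₀ _ (mul_ne_zero Real.pi_ne_zero hx)]

theorem sinc_pos_of_mem_Ico {x : ℝ} (hx : x ∈ Set.Ico 0 1) : 0 < sinc x := by
  rcases hx.1.eq_or_lt with rfl | hx₀
  · simp [sinc]
  · have hsin : 0 < Real.sin (Real.pi * x) :=
      Real.sin_pos_of_pos_of_lt_pi (by positivity) (mul_lt_of_lt_one_right Real.pi_pos hx.2)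
    rw [← pi_mul_mul_sinc] at hsin
    exact pos_of_mul_pos_right hsin (by positivity)

theorem real_sinc_antitoneOn_Icc : AntitoneOn Real.sinc (Set.Icc 0 Real.pi) := by
  intro x hx y hy hxy
  rcases hx.1.eq_or_lt with rfl | hx₀
  · simpa using Real.sinc_le_one y
  · have hslope := strictConcaveOn_sin_Icc.concaveOn.antitoneOn_slope_gt
      (Set.left_mem_Icc.2 Real.pi_pos.le)
    have hy₀ : 0 < y := hx₀.trans_le hxy
    rw [Real.sinc_eq_dslope, dslope_of_ne _ hx₀.ne', dslope_of_ne _ hy₀.ne']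
    exact hslope ⟨hx, hx₀⟩ ⟨hy, hy₀⟩ hxy

theorem sinc_antitoneOn_Icc : AntitoneOn sinc (Set.Icc 0 1) := by
  have hmaps : ∀ x ∈ Set.Icc (0 : ℝ) 1, Real.pi * x ∈ Set.Icc 0 Real.pi := fun x hx ↦
    ⟨mul_nonneg Real.pi_pos.le hx.1, mul_le_of_le_one_right Real.pi_pos.le hx.2⟩
  intro x hx y hy hxy
  rw [sinc_eq_real_sinc, sinc_eq_real_sinc]
  exact real_sinc_antitoneOn_Icc (hmaps x hx) (hmaps y hy)
    (mul_le_mul_of_nonneg_left hxy Real.pi_pos.le)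

theorem natCast_div_mem_Ico {k n : ℕ} (hk : k < n) : (k : ℝ) / n ∈ Set.Ico 0 1 :=
  ⟨by positivity, (div_lt_one (by exact_mod_cast Nat.zero_lt_of_lt hk)).2 (by exact_mod_cast hk)⟩

theorem sub_one_div_mem_Ico {n : ℕ} (hn : n ≠ 0) : ((n : ℝ) - 1) / n ∈ Set.Ico 0 1 := by
  have h := natCast_div_mem_Ico (Nat.sub_one_lt hn)
  rwa [Nat.cast_pred (Nat.pos_of_ne_zero hn)] at h

theorem sinc_sub_one_div_le_sinc_div {k n : ℕ} (hk : k < n) :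
    sinc (((n : ℝ) - 1) / n) ≤ sinc ((k : ℝ) / n) := by
  have hk' : (k : ℝ) ≤ (n : ℝ) - 1 := le_sub_iff_add_le.2 (by exact_mod_cast hk)
  exact sinc_antitoneOn_Icc (Set.Ico_subset_Icc_self (natCast_div_mem_Ico hk))
    (Set.Ico_subset_Icc_self (sub_one_div_mem_Ico (Nat.ne_zero_of_lt hk))) (by gcongr)

end Sinc

section Parseval

theorem sum_norm_sq_sum_addChar_smul {R 𝕜 E : Type*} [CommRing R] [Fintype R] [RCLike 𝕜]
    [NormedAddCommGroup E] [InnerProductSpace 𝕜 E] {ψ : AddChar R 𝕜} (hψ : ψ.IsPrimitive)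
    (Φ : R → E) :
    ∑ x, ‖∑ y, ψ (y * x) • Φ y‖ ^ 2 = Fintype.card R * ∑ y, ‖Φ y‖ ^ 2 := by
  classical
  have horth (y z : R) : ∑ x, ψ (z * x) * starRingEnd 𝕜 (ψ (y * x)) =
      if y = z then (Fintype.card R : 𝕜) else 0 := by
    have hdiff (x : R) : ψ (z * x) * starRingEnd 𝕜 (ψ (y * x)) = ψ (x * (z - y)) := by
      rw [← AddChar.map_neg_eq_conj, ← AddChar.map_add_eq_mul]
      ring_nf
    simp only [hdiff, AddChar.sum_mulShift _ hψ, sub_eq_zero, eq_comm (a := z), Nat.cast_ite,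
      Nat.cast_zero]
  have hinner : ∑ x, inner 𝕜 (∑ y, ψ (y * x) • Φ y) (∑ z, ψ (z * x) • Φ z) =
      Fintype.card R * ∑ y, inner 𝕜 (Φ y) (Φ y) := by
    calc ∑ x, inner 𝕜 (∑ y, ψ (y * x) • Φ y) (∑ z, ψ (z * x) • Φ z)
        = ∑ x, ∑ y, ∑ z, ψ (z * x) * starRingEnd 𝕜 (ψ (y * x)) * inner 𝕜 (Φ y) (Φ z) := by
          refine sum_congr rfl fun x _ ↦ ?_
          rw [sum_inner]
          simp only [inner_sum, inner_smul_left, inner_smul_right, mul_assoc]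
      _ = ∑ y, ∑ z, (∑ x, ψ (z * x) * starRingEnd 𝕜 (ψ (y * x))) * inner 𝕜 (Φ y) (Φ z) := by
          simp only [sum_mul]
          rw [sum_comm]
          exact sum_congr rfl fun y _ ↦ sum_comm
      _ = Fintype.card R * ∑ y, inner 𝕜 (Φ y) (Φ y) := by
          simp only [horth, ite_mul, zero_mul, sum_ite_eq, mem_univ, if_true, mul_sum]
  simp only [inner_self_eq_norm_sq_to_K] at hinner
  exact_mod_cast hinner

variable {n : ℕ} [NeZero n]

theorem sum_norm_sq_invDFT {E : Type*} [NormedAddCommGroup E] [InnerProductSpace ℂ E]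
    (Φ : ZMod n → E) :
    ∑ x, ‖𝓕⁻ Φ x‖ ^ 2 = (n : ℝ)⁻¹ * ∑ y, ‖Φ y‖ ^ 2 := by
  simp only [invDFT_apply, norm_smul, mul_pow, ← mul_sum,
    sum_norm_sq_sum_addChar_smul (isPrimitive_stdAddChar n), ZMod.card, norm_inv,
    Complex.norm_natCast]
  field_simp

theorem sum_norm_sq_invDFT_le {E : Type*} [NormedAddCommGroup E] [InnerProductSpace ℂ E]
    {Φ : ZMod n → E} {C : ℝ} (hΦ : ∀ y, ‖Φ y‖ ≤ C) :
    ∑ x, ‖𝓕⁻ Φ x‖ ^ 2 ≤ C ^ 2 := by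
  calc ∑ x, ‖𝓕⁻ Φ x‖ ^ 2 = (n : ℝ)⁻¹ * ∑ y, ‖Φ y‖ ^ 2 := sum_norm_sq_invDFT Φ
    _ ≤ (n : ℝ)⁻¹ * ∑ _y : ZMod n, C ^ 2 := by gcongr with y; exact hΦ y
    _ = C ^ 2 := by simp [NeZero.ne n]

theorem sum_zmod_val {M : Type*} [AddCommMonoid M] (f : ℕ → M) :
    ∑ x : ZMod n, f x.val = ∑ k ∈ range n, f k :=
  sum_bij' (fun x _ ↦ x.val) (fun k _ ↦ (k : ZMod n)) (fun x _ ↦ mem_range.2 x.val_lt)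
    (fun _ _ ↦ mem_univ _) (fun x _ ↦ natCast_zmod_val x)
    (fun _ hk ↦ val_cast_of_lt (mem_range.1 hk)) (fun _ _ ↦ rfl)

theorem sum_fin_natCast_zmod {M : Type*} [AddCommMonoid M] (f : ZMod n → M) :
    ∑ j : Fin n, f (j : ℕ) = ∑ x, f x := by
  rw [Fin.sum_univ_eq_sum_range (fun k ↦ f k), ← sum_zmod_val]
  simp only [natCast_zmod_val]

theorem invDFT_natCast {E : Type*} [AddCommGroup E] [Module ℂ E] (c : ℕ → E) (j : ℕ) :
    𝓕⁻ (fun y : ZMod n ↦ c y.val) (j : ZMod n) = (1 / n : ℂ) • ∑ k ∈ range n,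
      Complex.exp (2 * (Real.pi : ℂ) * Complex.I * (j : ℂ) * (k : ℂ) / (n : ℂ)) • c k := by
  have hchar (y : ZMod n) : stdAddChar (y * (j : ZMod n)) =
      Complex.exp (2 * (Real.pi : ℂ) * Complex.I * (j : ℂ) * (y.val : ℂ) / (n : ℂ)) := by
    have hcast : y * (j : ZMod n) = ((j * y.val : ℤ) : ZMod n) := by
      push_cast
      rw [natCast_zmod_val, mul_comm]
    rw [hcast, stdAddChar_coe]
    push_cast
    ring_nf
  simp only [invDFT_apply, hchar, one_div]
  exact congrArg _ (sum_zmod_val fun k ↦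
    Complex.exp (2 * (Real.pi : ℂ) * Complex.I * (j : ℂ) * (k : ℂ) / (n : ℂ)) • c k)

end Parseval

section Gaudi

theorem norm_dKerR_le (n : ℕ) (σ w : ℝ) (k : ℕ) :
    ‖dKerR n σ w k‖ ≤ |w * sinc (w * k / n) / sinc ((k : ℝ) / n)| := by
  have hphase : ‖Complex.exp (Complex.I * Real.pi * k * (1 - w) / n)‖ = 1 := by
    have hI : Complex.I * Real.pi * k * (1 - w) / n =
        ((Real.pi * k * (1 - w) / n : ℝ) : ℂ) * Complex.I := by
      push_cast
      ring
    rw [hI, Complex.norm_exp_ofReal_mul_I]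
  have hgauss : Real.exp (-(k : ℝ) ^ 2 / (2 * σ ^ 2)) ≤ 1 := by
    rw [Real.exp_le_one_iff, neg_div, neg_nonpos]
    positivity
  rw [dKerR, norm_mul, norm_mul, hphase, mul_one, Complex.norm_real, Complex.norm_real,
    Real.norm_eq_abs, Real.norm_eq_abs, Real.abs_exp]
  exact mul_le_of_le_one_left (abs_nonneg _) hgauss

theorem pi_mul_div_mul_norm_dKerR_le (n : ℕ) (σ w : ℝ) (k : ℕ) :
    Real.pi * (k / n) * ‖dKerR n σ w k‖ ≤ 1 / |sinc ((k : ℝ) / n)| := by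
  have hsin : Real.pi * (k / n) * (w * sinc (w * k / n)) = Real.sin (Real.pi * (w * k / n)) := by
    rw [← pi_mul_mul_sinc]
    ring
  have hnonneg : 0 ≤ Real.pi * ((k : ℝ) / n) := by positivity
  calc Real.pi * (k / n) * ‖dKerR n σ w k‖
      ≤ Real.pi * (k / n) * |w * sinc (w * k / n) / sinc ((k : ℝ) / n)| := by
        gcongr
        exact norm_dKerR_le n σ w k
    _ = |Real.sin (Real.pi * (w * k / n))| / |sinc ((k : ℝ) / n)| := by
        rw [← hsin, abs_mul, abs_of_nonneg hnonneg, abs_div, ← mul_div_assoc]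
    _ ≤ 1 / |sinc ((k : ℝ) / n)| := by
        gcongr
        exact Real.abs_sin_le_one _

/-- The `k`-th Fourier coefficient `(-2πik/n) e^{-2πikl/n} d_w^σ[k]` of the derivative of the Gaudi
mask with respect to its location `l`; the mask derivative is the inverse discrete Fourier transform
of these coefficients. -/
noncomputable def gaudiLocationDerivCoeff (n : ℕ) (σ w l : ℝ) (k : ℕ) : ℂ :=
  (-2 * (Real.pi : ℂ) * Complex.I * (k : ℂ) / (n : ℂ))
    * Complex.exp (-2 * (Real.pi : ℂ) * Complex.I * (k : ℂ) * (l : ℂ) / (n : ℂ))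
    * dKerR n σ w k

theorem norm_gaudiLocationDerivCoeff (n : ℕ) (σ w l : ℝ) (k : ℕ) :
    ‖gaudiLocationDerivCoeff n σ w l k‖ = 2 * (Real.pi * (k / n) * ‖dKerR n σ w k‖) := by
  have hphase : ‖Complex.exp (-2 * Real.pi * Complex.I * k * l / n)‖ = 1 := by
    have hI : -2 * Real.pi * Complex.I * k * l / n =
        ((-2 * Real.pi * k * l / n : ℝ) : ℂ) * Complex.I := by
      push_cast
      ring
    rw [hI, Complex.norm_exp_ofReal_mul_I]
  have hfactor : ‖-2 * Real.pi * Complex.I * k / n‖ = 2 * (Real.pi * (k / n)) := by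
    simp only [norm_div, norm_mul, norm_neg, Complex.norm_ofNat, Complex.norm_real, Complex.norm_I,
      Complex.norm_natCast, Real.norm_of_nonneg Real.pi_pos.le]
    ring
  rw [gaudiLocationDerivCoeff, norm_mul, norm_mul, hphase, hfactor]
  ring

theorem norm_gaudiLocationDerivCoeff_le {n k : ℕ} (hk : k < n) (σ w l : ℝ) :
    ‖gaudiLocationDerivCoeff n σ w l k‖ ≤ 2 / sinc (((n : ℝ) - 1) / n) := by
  have hpos : 0 < sinc (((n : ℝ) - 1) / n) :=
    sinc_pos_of_mem_Ico (sub_one_div_mem_Ico (Nat.ne_zero_of_lt hk))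
  calc ‖gaudiLocationDerivCoeff n σ w l k‖
      = 2 * (Real.pi * (k / n) * ‖dKerR n σ w k‖) := norm_gaudiLocationDerivCoeff n σ w l k
    _ ≤ 2 * (1 / |sinc ((k : ℝ) / n)|) := by
        gcongr
        exact pi_mul_div_mul_norm_dKerR_le n σ w k
    _ ≤ 2 * (1 / sinc (((n : ℝ) - 1) / n)) := by
        gcongr
        exact (sinc_sub_one_div_le_sinc_div hk).trans (le_abs_self _)
    _ = 2 / sinc (((n : ℝ) - 1) / n) := mul_one_div _ _

theorem two_div_sinc_sub_one_div_le {n : ℕ} (hn : 2 ≤ n) :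
    2 / sinc (((n : ℝ) - 1) / n) ≤
      2 * Real.pi * (((n : ℝ) - 1) / n) / sinc (((n : ℝ) - 1) / n) := by
  have hn' : (2 : ℝ) ≤ n := by exact_mod_cast hn
  have hhalf : 1 / 2 ≤ ((n : ℝ) - 1) / n := by
    rw [div_le_div_iff₀ two_pos (by positivity)]
    linarith
  have hpos : 0 < sinc (((n : ℝ) - 1) / n) := sinc_pos_of_mem_Ico (sub_one_div_mem_Ico (by omega))
  gcongr
  nlinarith [Real.pi_gt_three]

theorem norm_gaudiMask_location_deriv_le_general (n : ℕ) (hn : n ≠ 0) (σ : ℝ) (_hσ : σ ≠ 0)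
    (w l : ℝ) (h : EuclideanSpace ℂ (Fin n))
    (hh : ∀ j : Fin n, h j = (1 / n : ℂ) * ∑ k ∈ Finset.range n,
      Complex.exp (2 * (Real.pi : ℂ) * Complex.I * (j : ℂ) * (k : ℂ) / (n : ℂ))
        * (-2 * (Real.pi : ℂ) * Complex.I * (k : ℂ) / (n : ℂ))
        * Complex.exp (-2 * (Real.pi : ℂ) * Complex.I * (k : ℂ) * (l : ℂ) / (n : ℂ))
        * dKerR n σ w k) :
    ‖h‖ ≤ 2 / sinc (((n : ℝ) - 1) / n) := by
  have : NeZero n := ⟨hn⟩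
  have hpos : 0 < sinc (((n : ℝ) - 1) / n) := sinc_pos_of_mem_Ico (sub_one_div_mem_Ico hn)
  let Φ : ZMod n → ℂ := fun y ↦ gaudiLocationDerivCoeff n σ w l y.val
  have hDFT (j : Fin n) : h j = 𝓕⁻ Φ (j : ℕ) := by
    rw [hh, invDFT_natCast]
    simp only [gaudiLocationDerivCoeff, smul_eq_mul, mul_assoc]
  refine le_of_sq_le_sq ?_ (by positivity)
  calc ‖h‖ ^ 2 = ∑ j : Fin n, ‖𝓕⁻ Φ (j : ℕ)‖ ^ 2 := by simp only [EuclideanSpace.norm_sq_eq, hDFT]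
    _ = ∑ x, ‖𝓕⁻ Φ x‖ ^ 2 := sum_fin_natCast_zmod fun x ↦ ‖𝓕⁻ Φ x‖ ^ 2
    _ ≤ (2 / sinc (((n : ℝ) - 1) / n)) ^ 2 :=
        sum_norm_sq_invDFT_le fun y ↦ norm_gaudiLocationDerivCoeff_le y.val_lt σ w l

end Gaudi

/-- Bound on the norm of the location-derivative of the Gaudi mask:
`‖h‖₂ ≤ 2π·((n−1)/n)/sinc((n−1)/n)`. -/
theorem norm_gaudiMask_location_deriv_le (n : ℕ) (hn : 2 ≤ n) (σ : ℝ) (hσ : 0 < σ)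
    (w l : ℝ) (hw : w ∈ Set.Icc (0 : ℝ) n) (hl : l ∈ Set.Icc (0 : ℝ) n)
    (h : EuclideanSpace ℂ (Fin n))
    (hh : ∀ j : Fin n, h j = (1 / n : ℂ) * ∑ k ∈ Finset.range n,
      Complex.exp (2 * (Real.pi : ℂ) * Complex.I * (j : ℂ) * (k : ℂ) / (n : ℂ))
        * (-2 * (Real.pi : ℂ) * Complex.I * (k : ℂ) / (n : ℂ))
        * Complex.exp (-2 * (Real.pi : ℂ) * Complex.I * (k : ℂ) * (l : ℂ) / (n : ℂ))
        * dKerR n σ w k) :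
    ‖h‖ ≤ 2 * Real.pi * (((n : ℝ) - 1) / n) / sinc (((n : ℝ) - 1) / n) := by
  exact (norm_gaudiMask_location_deriv_le_general n (by omega) σ hσ.ne' w l h hh).trans
    (two_div_sinc_sub_one_div_le hn)
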